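/- arXiv:2506.06073 — 5 statements merged into one kernel-verified Lean document; each statement's English description precedes it below -/
import Mathlib

section
/- Fix d ∈ ℕ, λ > 0 and a threshold τ > 0, and define the BBQ query process on a finite sequence L = (x_1, …, x_T) of vectors in ℝ^d recursively by A_0 = λ·I and, for t = 1, …, T: if x_tᵀ A_{t−1}^{−1} x_t > τ then x_t is queried and A_t = A_{t−1} + x_t x_tᵀ, otherwise A_t = A_{t−1}; let Q(L) denote the subsequence of queried vectors. Then for every finite sequence S and every subset U of its entries, running the BBQ query process (with the same λ and τ) on the subsequence of Q(S) obtained by removing the entries of U (keeping the original order) queries every remaining point; equivalently, Q(Q(S)\U) = Q(S)\U. -/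
/-!
Deleting queried points only shrinks the matrix in the Loewner order: if `B` is the matrix reached
on the thinned sequence and `A` the one reached on the original, then `B` is positive definite and
`A - B` is positive semidefinite. Inversion is antitone on positive definite matrices
(`quadForm_inv_antitone`), so `xᵀ A⁻¹ x > τ` forces `xᵀ B⁻¹ x > τ`, and each surviving query is
queried again. The theorem is the induction on the sequence that carries this invariant
(`bbqRun_filter_invariant`).
-/

open Matrix

variable {d : ℕ}

open Classical in
/-- One step of the BBQ query process: given the current matrix `A` and the list of
queried points so far, process the next point `x`: if `xᵀ A⁻¹ x > τ` then `x` is queried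
and `A` is updated to `A + x xᵀ`, otherwise nothing changes. -/
noncomputable def bbqStep (τ : ℝ) (p : Matrix (Fin d) (Fin d) ℝ × List (Fin d → ℝ))
    (x : Fin d → ℝ) : Matrix (Fin d) (Fin d) ℝ × List (Fin d → ℝ) :=
  if x ⬝ᵥ (p.1⁻¹ *ᵥ x) > τ then (p.1 + vecMulVec x x, p.2 ++ [x]) else p

/-- Run the BBQ query process with regularization `lam` and threshold `τ` on the
finite sequence `L`, returning the final matrix together with the subsequence of
queried points. -/
noncomputable def bbqRun (lam τ : ℝ) (L : List (Fin d → ℝ)) :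
    Matrix (Fin d) (Fin d) ℝ × List (Fin d → ℝ) :=
  L.foldl (bbqStep τ) (lam • (1 : Matrix (Fin d) (Fin d) ℝ), [])

/-- The subsequence `Q(L)` of points queried by the BBQ query process on `L`. -/
noncomputable def bbqQueries (lam τ : ℝ) (L : List (Fin d → ℝ)) : List (Fin d → ℝ) :=
  (bbqRun lam τ L).2

/-- Inversion is antitone in the Loewner order, tested on a single vector. With `u = A⁻¹ x` and
`v = B⁻¹ x` it follows from `0 ≤ (u - v)ᵀ B (u - v)` and `uᵀ B u ≤ uᵀ A u`. -/
lemma quadForm_inv_antitone {A B : Matrix (Fin d) (Fin d) ℝ} (hB : B.PosDef)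
    (hAB : (A - B).PosSemidef) (x : Fin d → ℝ) :
    x ⬝ᵥ (A⁻¹ *ᵥ x) ≤ x ⬝ᵥ (B⁻¹ *ᵥ x) := by
  have hA : A.PosDef := by simpa using hB.add_posSemidef hAB
  have hu : A *ᵥ (A⁻¹ *ᵥ x) = x := by
    rw [mulVec_mulVec, mul_nonsing_inv _ ((isUnit_iff_isUnit_det A).1 hA.isUnit), one_mulVec]
  have hv : B *ᵥ (B⁻¹ *ᵥ x) = x := by
    rw [mulVec_mulVec, mul_nonsing_inv _ ((isUnit_iff_isUnit_det B).1 hB.isUnit), one_mulVec]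
  generalize A⁻¹ *ᵥ x = u at *
  generalize B⁻¹ *ᵥ x = v at *
  have h1 := hB.posSemidef.dotProduct_mulVec_nonneg (u - v)
  have h2 := hAB.dotProduct_mulVec_nonneg u
  have hsymm : v ⬝ᵥ (B *ᵥ u) = u ⬝ᵥ x := by
    have hT : Bᵀ = B := by simpa [IsHermitian] using hB.isHermitian
    rw [dotProduct_mulVec, ← mulVec_transpose, hT, hv, dotProduct_comm]
  simp only [star_trivial, mulVec_sub, sub_mulVec, dotProduct_sub, sub_dotProduct, hu, hv,
    hsymm] at h1 h2
  rw [dotProduct_comm x u, dotProduct_comm x v]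
  linarith

open Classical in
/-- The process on `Q(S) \ U` queries everything, and its final matrix is positive definite and
Loewner-below the final matrix of the process on `S`. -/
lemma bbqRun_filter_invariant (lam τ : ℝ) (hlam : 0 < lam) (S : List (Fin d → ℝ))
    (U : Set (Fin d → ℝ)) :
    (bbqRun lam τ ((bbqRun lam τ S).2.filter (fun x => x ∉ U))).2 =
        (bbqRun lam τ S).2.filter (fun x => x ∉ U) ∧
      (bbqRun lam τ ((bbqRun lam τ S).2.filter (fun x => x ∉ U))).1.PosDef ∧
      ((bbqRun lam τ S).1 -
        (bbqRun lam τ ((bbqRun lam τ S).2.filter (fun x => x ∉ U))).1).PosSemidef := by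
  have run_append (L : List (Fin d → ℝ)) (x : Fin d → ℝ) :
      bbqRun lam τ (L ++ [x]) = bbqStep τ (bbqRun lam τ L) x := by
    simp [bbqRun]
  induction S using List.reverseRecOn with
  | nil =>
    refine ⟨by simp [bbqRun], ?_, ?_⟩
    · simpa [bbqRun] using PosDef.one.smul hlam
    · simpa [bbqRun] using PosSemidef.zero
  | append_singleton S x ih =>
    obtain ⟨ihQ, ihB, ihAB⟩ := ih
    have hx : (vecMulVec x x).PosSemidef := by
      simpa using posSemidef_vecMulVec_self_star x
    rw [run_append]
    by_cases hq : x ⬝ᵥ ((bbqRun lam τ S).1⁻¹ *ᵥ x) > τ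
    · have hstep : bbqStep τ (bbqRun lam τ S) x =
          ((bbqRun lam τ S).1 + vecMulVec x x, (bbqRun lam τ S).2 ++ [x]) := if_pos hq
      rw [hstep]
      by_cases hxU : x ∈ U
      · have hf : ((bbqRun lam τ S).2 ++ [x]).filter (fun x => x ∉ U) =
            (bbqRun lam τ S).2.filter (fun x => x ∉ U) := by simp [hxU]
        simp only [hf]
        refine ⟨ihQ, ihB, ?_⟩
        rw [add_sub_right_comm]
        exact ihAB.add hx
      · have hf : ((bbqRun lam τ S).2 ++ [x]).filter (fun x => x ∉ U) =
            (bbqRun lam τ S).2.filter (fun x => x ∉ U) ++ [x] := by simp [hxU]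
        simp only [hf, run_append]
        rw [bbqStep, if_pos (lt_of_lt_of_le hq (quadForm_inv_antitone ihB ihAB x))]
        refine ⟨by rw [ihQ], ihB.add_posSemidef hx, ?_⟩
        rwa [add_sub_add_right_eq_sub]
    · have hstep : bbqStep τ (bbqRun lam τ S) x = bbqRun lam τ S := if_neg hq
      rw [hstep]
      exact ⟨ihQ, ihB, ihAB⟩

open Classical in
/-- Monotonicity of the BBQ query condition under deletion: for every finite sequence `S`
and every subset `U` of its entries, running the BBQ process on `Q(S)` with the entries
of `U` removed (keeping the original order) queries every remaining point:
`Q(Q(S) \ U) = Q(S) \ U`. -/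
theorem bbqQueries_monotone (lam τ : ℝ) (hlam : 0 < lam) (hτ : 0 < τ)
    (S : List (Fin d → ℝ)) (U : Set (Fin d → ℝ)) (hU : U ⊆ {x | x ∈ S}) :
    bbqQueries lam τ ((bbqQueries lam τ S).filter (fun x => x ∉ U)) =
      (bbqQueries lam τ S).filter (fun x => x ∉ U) :=
  (bbqRun_filter_invariant lam τ hlam S U).1
end

section
/- Let λ > 0 and let {x_t}_{t ∈ S} be a finite family of vectors in ℝ^d, and define A_S = λ·I + Σ_{t ∈ S} x_t x_tᵀ. If i ∈ S and ‖x_i‖ ≤ 1, then x_iᵀ A_S^{−1} x_i ≤ 1/(λ + 1). -/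
/-!
Put `A = A_S`, `y = A⁻¹ x_i` and `q = x_i ⬝ᵥ y`. Since `A y = x_i`,
`q = y ⬝ᵥ A y = λ ‖y‖² + ∑ t ∈ S, (x_t ⬝ᵥ y)² ≥ λ ‖y‖² + q²`, keeping only the term `t = i` of
the sum. By Cauchy–Schwarz and `‖x_i‖ ≤ 1`, `q² ≤ ‖y‖²`. Hence `q ≥ (λ + 1) q²`, which forces
`q ≤ 1 / (λ + 1)`.
-/

open Matrix

lemma regularizedGram_posDef {d : ℕ} {ι : Type*} {lam : ℝ} (hlam : 0 < lam)
    (S : Finset ι) (x : ι → (Fin d → ℝ)) :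
    (lam • (1 : Matrix (Fin d) (Fin d) ℝ) + ∑ t ∈ S, vecMulVec (x t) (x t)).PosDef := by
  refine (PosDef.one.smul hlam).add_posSemidef (posSemidef_sum S fun t _ => ?_)
  simpa using posSemidef_vecMulVec_self_star (x t)

lemma dotProduct_regularizedGram_mulVec {d : ℕ} {ι : Type*} (lam : ℝ)
    (S : Finset ι) (x : ι → (Fin d → ℝ)) (y : Fin d → ℝ) :
    y ⬝ᵥ ((lam • (1 : Matrix (Fin d) (Fin d) ℝ) + ∑ t ∈ S, vecMulVec (x t) (x t)) *ᵥ y) =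
      lam * (y ⬝ᵥ y) + ∑ t ∈ S, (x t ⬝ᵥ y) ^ 2 := by
  rw [add_mulVec, dotProduct_add, smul_mulVec, one_mulVec, dotProduct_smul, smul_eq_mul,
    sum_mulVec, dotProduct_sum]
  congr 1
  refine Finset.sum_congr rfl fun t _ => ?_
  rw [vecMulVec_mulVec, op_smul_eq_smul, dotProduct_smul, smul_eq_mul, dotProduct_comm y, sq]

/-- If `A_S = λ·I + Σ_{t ∈ S} x_t x_tᵀ` with `λ > 0`, `i ∈ S` and `‖x_i‖ ≤ 1`
(Euclidean norm), then `x_iᵀ A_S⁻¹ x_i ≤ 1/(λ + 1)`. -/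
theorem queried_point_quadratic_form_le {d : ℕ} {ι : Type*} (lam : ℝ) (hlam : 0 < lam)
    (S : Finset ι) (x : ι → (Fin d → ℝ)) (i : ι) (hi : i ∈ S)
    (hnorm : Real.sqrt (x i ⬝ᵥ x i) ≤ 1) :
    x i ⬝ᵥ ((lam • (1 : Matrix (Fin d) (Fin d) ℝ) +
        ∑ t ∈ S, vecMulVec (x t) (x t))⁻¹ *ᵥ x i) ≤ 1 / (lam + 1) := by
  set A := lam • (1 : Matrix (Fin d) (Fin d) ℝ) + ∑ t ∈ S, vecMulVec (x t) (x t) with hA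
  have hdet : IsUnit A.det := (isUnit_iff_isUnit_det A).mp (regularizedGram_posDef hlam S x).isUnit
  set y := A⁻¹ *ᵥ x i with hy
  have hAy : A *ᵥ y = x i := by
    rw [hy, mulVec_mulVec, mul_nonsing_inv A hdet, one_mulVec]
  have hquad : x i ⬝ᵥ y = lam * (y ⬝ᵥ y) + ∑ t ∈ S, (x t ⬝ᵥ y) ^ 2 := by
    rw [← dotProduct_regularizedGram_mulVec, ← hA, hAy, dotProduct_comm]
  have hterm : (x i ⬝ᵥ y) ^ 2 ≤ ∑ t ∈ S, (x t ⬝ᵥ y) ^ 2 :=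
    Finset.single_le_sum (f := fun t => (x t ⬝ᵥ y) ^ 2) (fun t _ => sq_nonneg _) hi
  have hx : x i ⬝ᵥ x i ≤ 1 := by simpa using Real.sqrt_le_iff.mp hnorm
  have hyy : 0 ≤ y ⬝ᵥ y := Finset.sum_nonneg fun j _ => mul_self_nonneg (y j)
  have hcs : (x i ⬝ᵥ y) ^ 2 ≤ (x i ⬝ᵥ x i) * (y ⬝ᵥ y) := by
    simpa [dotProduct, sq] using Finset.sum_mul_sq_le_sq_mul_sq Finset.univ (x i) y
  have hqy : (x i ⬝ᵥ y) ^ 2 ≤ y ⬝ᵥ y := hcs.trans (mul_le_of_le_one_left hyy hx)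
  have hq : (lam + 1) * (x i ⬝ᵥ y) ^ 2 ≤ x i ⬝ᵥ y := by
    linarith [mul_le_mul_of_nonneg_left hqy hlam.le]
  rw [le_div_iff₀ (by positivity)]
  by_contra! h
  have hpos : 0 < x i ⬝ᵥ y := pos_of_mul_pos_left (one_pos.trans h) (by positivity)
  nlinarith [mul_lt_mul_of_pos_left h hpos]
end

section
/- Let λ > 0 and let {x_t}_{t ∈ S} be a finite family of vectors in ℝ^d with ‖x_t‖ ≤ 1 for every t ∈ S, and for V ⊆ S define A_V = λ·I + Σ_{t ∈ V} x_t x_tᵀ. Let x ∈ ℝ^d and c ≥ 0 satisfy xᵀ A_S^{−1} x ≤ c. Then for every U ⊆ S with |U| = K, xᵀ A_{S\U}^{−1} x ≤ c · Σ_{i=0}^{K} (K choose i) · λ^{−i}. -/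
open Matrix

/-!
Write `A = A_S`, `B = A_{S \ U}`, `y = B⁻¹ v`, `w = A⁻¹ v` and `M = 1 + K / λ`. Deleting `K` terms
`x_t x_tᵀ ≤ I` and using `λ I ≤ B` gives `A ≤ M B` as quadratic forms (`regGram_form_le`). This order
is reversed by inversion: expanding `0 ≤ (y - M w)ᵀ A (y - M w)` with `A w = B y = v` and
`yᵀ A y ≤ M yᵀ B y` yields `vᵀ y ≤ M vᵀ w`. Finally, Bernoulli's inequality and the binomial theorem
give `1 + K / λ ≤ (1 + 1 / λ) ^ K = ∑ i, (K choose i) / λ ^ i`. The deletions are thus handled all at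
once, with the sharper linear factor `1 + K / λ`.
-/

/-- The regularized Gram matrix `A_V = λ I + ∑_{t ∈ V} x_t x_tᵀ`. -/
abbrev regGram {d : ℕ} {ι : Type*} (lam : ℝ) (x : ι → (Fin d → ℝ)) (V : Finset ι) :
    Matrix (Fin d) (Fin d) ℝ :=
  lam • (1 : Matrix (Fin d) (Fin d) ℝ) + ∑ t ∈ V, vecMulVec (x t) (x t)

lemma dotProduct_regGram_mulVec {d : ℕ} {ι : Type*} (lam : ℝ) (x : ι → (Fin d → ℝ))
    (V : Finset ι) (a b : Fin d → ℝ) :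
    a ⬝ᵥ (regGram lam x V *ᵥ b) = lam * (a ⬝ᵥ b) + ∑ t ∈ V, (x t ⬝ᵥ a) * (x t ⬝ᵥ b) := by
  rw [regGram, add_mulVec, dotProduct_add, smul_mulVec, one_mulVec, dotProduct_smul, smul_eq_mul,
    sum_mulVec, dotProduct_sum]
  congr 1
  refine Finset.sum_congr rfl fun t _ => ?_
  rw [vecMulVec_mulVec, op_smul_eq_smul, dotProduct_smul, smul_eq_mul, dotProduct_comm a, mul_comm]

lemma dotProduct_regGram_mulVec_comm {d : ℕ} {ι : Type*} (lam : ℝ) (x : ι → (Fin d → ℝ))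
    (V : Finset ι) (a b : Fin d → ℝ) :
    a ⬝ᵥ (regGram lam x V *ᵥ b) = b ⬝ᵥ (regGram lam x V *ᵥ a) := by
  simp only [dotProduct_regGram_mulVec, dotProduct_comm a b, mul_comm]

lemma dotProduct_self_nonneg_real {d : ℕ} (a : Fin d → ℝ) : 0 ≤ a ⬝ᵥ a :=
  Finset.sum_nonneg fun i _ => mul_self_nonneg (a i)

lemma mul_dotProduct_self_le_regGram {d : ℕ} {ι : Type*} (lam : ℝ) (x : ι → (Fin d → ℝ))
    (V : Finset ι) (a : Fin d → ℝ) :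
    lam * (a ⬝ᵥ a) ≤ a ⬝ᵥ (regGram lam x V *ᵥ a) := by
  rw [dotProduct_regGram_mulVec]
  exact le_add_of_nonneg_right (Finset.sum_nonneg fun t _ => mul_self_nonneg _)

lemma regGram_mulVec_inv_mulVec {d : ℕ} {ι : Type*} {lam : ℝ} (hlam : 0 < lam)
    (x : ι → (Fin d → ℝ)) (V : Finset ι) (v : Fin d → ℝ) :
    regGram lam x V *ᵥ ((regGram lam x V)⁻¹ *ᵥ v) = v := by
  have hunit : IsUnit (regGram lam x V) := by
    rw [← mulVec_injective_iff_isUnit]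
    refine (injective_iff_map_eq_zero (regGram lam x V).mulVecLin).2 fun a ha => ?_
    rw [mulVecLin_apply] at ha
    have h := mul_dotProduct_self_le_regGram lam x V a
    rw [ha, dotProduct_zero] at h
    have h0 := dotProduct_self_nonneg_real a
    exact dotProduct_self_eq_zero.1 (by nlinarith)
  rw [mulVec_mulVec, mul_nonsing_inv _ ((isUnit_iff_isUnit_det _).1 hunit), one_mulVec]

/-- The quadratic-form inequality `A_S ≤ (1 + |U| / λ) A_{S \ U}`. -/
lemma regGram_form_le {d : ℕ} {ι : Type*} [DecidableEq ι] {lam : ℝ} (hlam : 0 < lam)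
    (x : ι → (Fin d → ℝ)) {S U : Finset ι} (hU : U ⊆ S) (hnorm : ∀ t ∈ S, x t ⬝ᵥ x t ≤ 1)
    (a : Fin d → ℝ) :
    a ⬝ᵥ (regGram lam x S *ᵥ a) ≤
      (1 + (U.card : ℝ) / lam) * (a ⬝ᵥ (regGram lam x (S \ U) *ᵥ a)) := by
  have hsum : ∑ t ∈ U, (x t ⬝ᵥ a) * (x t ⬝ᵥ a) ≤ U.card * (a ⬝ᵥ a) := by
    rw [← nsmul_eq_mul]
    refine Finset.sum_le_card_nsmul _ _ _ fun t ht => ?_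
    have hcs : (x t ⬝ᵥ a) * (x t ⬝ᵥ a) ≤ (x t ⬝ᵥ x t) * (a ⬝ᵥ a) := by
      have h := Finset.sum_mul_sq_le_sq_mul_sq Finset.univ (x t) a
      simpa only [dotProduct, pow_two] using h
    exact hcs.trans (mul_le_of_le_one_left (dotProduct_self_nonneg_real a) (hnorm t (hU ht)))
  have hsplit : a ⬝ᵥ (regGram lam x S *ᵥ a) =
      a ⬝ᵥ (regGram lam x (S \ U) *ᵥ a) + ∑ t ∈ U, (x t ⬝ᵥ a) * (x t ⬝ᵥ a) := by
    rw [dotProduct_regGram_mulVec, dotProduct_regGram_mulVec, ← Finset.sum_sdiff hU, add_assoc]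
  have hlow : U.card * (a ⬝ᵥ a) ≤
      (U.card : ℝ) / lam * (a ⬝ᵥ (regGram lam x (S \ U) *ᵥ a)) := by
    calc U.card * (a ⬝ᵥ a) = (U.card : ℝ) / lam * (lam * (a ⬝ᵥ a)) := by
          field_simp
      _ ≤ _ := mul_le_mul_of_nonneg_left (mul_dotProduct_self_le_regGram lam x _ a)
          (by positivity)
  rw [hsplit]
  linarith

lemma one_add_div_le_sum_choose {lam : ℝ} (hlam : 0 < lam) (K : ℕ) :
    1 + (K : ℝ) / lam ≤ ∑ i ∈ Finset.range (K + 1), (K.choose i : ℝ) / lam ^ i := by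
  have hpow : ∑ i ∈ Finset.range (K + 1), (K.choose i : ℝ) / lam ^ i = (1 + 1 / lam) ^ K := by
    rw [add_comm (1 : ℝ), add_pow]
    refine Finset.sum_congr rfl fun i _ => ?_
    rw [one_pow, mul_one, div_pow, one_pow]
    ring
  have hinv : 0 < 1 / lam := by positivity
  have hB := one_add_mul_le_pow (show (-2 : ℝ) ≤ 1 / lam by linarith) K
  rw [hpow]
  rwa [mul_one_div] at hB

/-- Binomial growth bound for the inverse-Gram quadratic form after `K` deletions:
if `A_V = λ·I + Σ_{t ∈ V} x_t x_tᵀ` with `λ > 0` and `‖x_t‖ ≤ 1`, and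
`xᵀ A_S⁻¹ x ≤ c`, then for every `U ⊆ S` with `|U| = K`,
`xᵀ A_{S\U}⁻¹ x ≤ c · Σ_{i=0}^{K} (K choose i) / λ^i`. -/
theorem quadratic_form_after_deletions_binomial_bound {d : ℕ} {ι : Type*} [DecidableEq ι]
    (lam : ℝ) (hlam : 0 < lam) (S : Finset ι) (x : ι → (Fin d → ℝ))
    (hnorm : ∀ t ∈ S, Real.sqrt (x t ⬝ᵥ x t) ≤ 1)
    (v : Fin d → ℝ) (c : ℝ) (hc : 0 ≤ c)
    (hv : v ⬝ᵥ ((lam • (1 : Matrix (Fin d) (Fin d) ℝ) +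
        ∑ t ∈ S, vecMulVec (x t) (x t))⁻¹ *ᵥ v) ≤ c)
    (K : ℕ) (U : Finset ι) (hU : U ⊆ S) (hK : U.card = K) :
    v ⬝ᵥ ((lam • (1 : Matrix (Fin d) (Fin d) ℝ) +
        ∑ t ∈ S \ U, vecMulVec (x t) (x t))⁻¹ *ᵥ v) ≤
      c * ∑ i ∈ Finset.range (K + 1), (K.choose i : ℝ) / lam ^ i := by
  have hnorm' : ∀ t ∈ S, x t ⬝ᵥ x t ≤ 1 := fun t ht => by
    simpa using (Real.sqrt_le_iff.1 (hnorm t ht)).2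
  set M : ℝ := 1 + (K : ℝ) / lam with hM
  have hMpos : 0 < M := by positivity
  have hw := regGram_mulVec_inv_mulVec hlam x S v
  have hy := regGram_mulVec_inv_mulVec hlam x (S \ U) v
  change v ⬝ᵥ ((regGram lam x S)⁻¹ *ᵥ v) ≤ c at hv
  change v ⬝ᵥ ((regGram lam x (S \ U))⁻¹ *ᵥ v) ≤ _
  set w := (regGram lam x S)⁻¹ *ᵥ v
  set y := (regGram lam x (S \ U))⁻¹ *ᵥ v
  have hle : y ⬝ᵥ (regGram lam x S *ᵥ y) ≤ M * (v ⬝ᵥ y) := by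
    have h := regGram_form_le hlam x hU hnorm' y
    rwa [hy, hK, ← hM, dotProduct_comm y v] at h
  have hsq : 0 ≤ (y - M • w) ⬝ᵥ (regGram lam x S *ᵥ (y - M • w)) :=
    (mul_nonneg hlam.le (dotProduct_self_nonneg_real _)).trans
      (mul_dotProduct_self_le_regGram lam x S _)
  have hexp : (y - M • w) ⬝ᵥ (regGram lam x S *ᵥ (y - M • w)) =
      y ⬝ᵥ (regGram lam x S *ᵥ y) - 2 * M * (v ⬝ᵥ y) + M ^ 2 * (v ⬝ᵥ w) := by
    have hcross : w ⬝ᵥ (regGram lam x S *ᵥ y) = v ⬝ᵥ y := by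
      rw [dotProduct_regGram_mulVec_comm, hw, dotProduct_comm]
    rw [mulVec_sub, mulVec_smul, hw]
    simp only [sub_dotProduct, dotProduct_sub, smul_dotProduct, dotProduct_smul, smul_eq_mul,
      hcross, dotProduct_comm y v, dotProduct_comm w v]
    ring
  have hmain : v ⬝ᵥ y ≤ M * (v ⬝ᵥ w) := by
    refine le_of_mul_le_mul_left ?_ hMpos
    linarith
  calc v ⬝ᵥ y ≤ M * (v ⬝ᵥ w) := hmain
    _ ≤ M * c := mul_le_mul_of_nonneg_left hv hMpos.le
    _ = c * M := mul_comm _ _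
    _ ≤ _ := mul_le_mul_of_nonneg_left (one_add_div_le_sum_choose hlam K) hc
end

section
/- Let A be a positive definite real d×d matrix and x ∈ ℝ^d. Then xᵀ (A + x xᵀ)^{−1} x ≤ log det(A + x xᵀ) − log det A. -/
/-!
Write `B = A + x xᵀ` and `b = xᵀ B⁻¹ x`. Applying the matrix determinant lemma to
`A = B - x xᵀ` gives `det A = det B * (1 - b)`, so `b = 1 - (det B / det A)⁻¹`, and the claim is
the inequality `1 - t⁻¹ ≤ log t` at `t = det B / det A`. Expanding around `B` rather than `A`
avoids the Sherman–Morrison formula for `B⁻¹`.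
-/

open Matrix

/-- Single-step elliptical potential inequality: for positive definite `A` and any `x`,
`xᵀ (A + x xᵀ)⁻¹ x ≤ log det(A + x xᵀ) − log det A`. -/
theorem elliptical_potential_step {d : ℕ} (A : Matrix (Fin d) (Fin d) ℝ)
    (hA : A.PosDef) (x : Fin d → ℝ) :
    x ⬝ᵥ ((A + vecMulVec x x)⁻¹ *ᵥ x) ≤
      Real.log (A + vecMulVec x x).det - Real.log A.det := by
  have hB : (A + vecMulVec x x).PosDef :=
    hA.add_posSemidef (by simpa using posSemidef_vecMulVec_self_star x)
  have hAB : A = (A + vecMulVec x x) +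
      replicateCol Unit (-x) * replicateRow Unit x := by
    rw [← vecMulVec_eq, neg_vecMulVec, add_neg_cancel_right]
  have hdA := hA.det_pos
  have hdB := hB.det_pos
  generalize A + vecMulVec x x = B at *
  have hdet : A.det = B.det * (1 - x ⬝ᵥ (B⁻¹ *ᵥ x)) := by
    rw [hAB, det_add_replicateCol_mul_replicateRow hdB.ne'.isUnit, det_unique (n := Unit), Matrix.mul_assoc,
      ← replicateCol_mulVec, Matrix.add_apply, replicateRow_mul_replicateCol_apply]
    simp [mulVec_neg, sub_eq_add_neg]
  have hb : x ⬝ᵥ (B⁻¹ *ᵥ x) = 1 - (B.det / A.det)⁻¹ := by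
    rw [inv_div, eq_sub_iff_add_eq, hdet]
    field_simp
    ring
  rw [hb, ← Real.log_div hdB.ne' hdA.ne']
  exact Real.one_sub_inv_le_log_of_pos (div_pos hdB hdA)
end

section
/- Fix d ∈ ℕ, λ > 0 and a threshold τ > 0, and define the BBQ query process on a finite sequence S = ((x_1,y_1), …, (x_T,y_T)) of labeled points with x_t ∈ ℝ^d, y_t ∈ ℝ, recursively by A_0 = λ·I and, for t = 1, …, T: if x_tᵀ A_{t−1}^{−1} x_t > τ then (x_t,y_t) is queried and A_t = A_{t−1} + x_t x_tᵀ, otherwise A_t = A_{t−1}; let 𝔠(S) denote the subsequence of queried labeled points. For a subset U of the entries of S, define the state-of-system state(S,U) := ( (λ·I + Σ_{(x,y) ∈ 𝔠(S)\U} x xᵀ)^{−1} · Σ_{(x,y) ∈ 𝔠(S)\U} y·x , 𝔠(S)\U ). Then for every S, taking S' = 𝔠(S), one has state(S,U) = state(S'\U, ∅) for every subset U of the entries of S; that is, the selective-sampling unlearning algorithm is an exact (ε = δ = 0) system-aware unlearning algorithm. -/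
/-!
The unlearning property reduces to `𝔠(𝔠(S) \ U) = 𝔠(S) \ U`, since the state depends on `S`
and `U` only through `𝔠(S) \ U`. For this identity, run the query process on `𝔠(S) \ U` in
parallel with the original run on `S`. The matrix `A'` of the new run is always dominated by the
matrix `A` of the original one in the Loewner order, because it is built from fewer rank-one terms.
Inversion reverses the Loewner order on positive definite matrices
(`dotProduct_inv_mulVec_anti`), so `xᵀ A'⁻¹ x ≥ xᵀ A⁻¹ x > τ` for every retained point,
and each of them is queried again (`bbqTail_filter_bbqTail`).
-/

open Matrix

variable {d : ℕ}

open Classical in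
/-- One step of the BBQ query process on labeled points: the query condition
`xᵀ A⁻¹ x > τ` depends only on the feature vector; a queried point is appended to the
list of queried labeled points and `A` becomes `A + x xᵀ`. -/
noncomputable def bbqLStep (τ : ℝ)
    (p : Matrix (Fin d) (Fin d) ℝ × List ((Fin d → ℝ) × ℝ)) (z : (Fin d → ℝ) × ℝ) :
    Matrix (Fin d) (Fin d) ℝ × List ((Fin d → ℝ) × ℝ) :=
  if z.1 ⬝ᵥ (p.1⁻¹ *ᵥ z.1) > τ then (p.1 + vecMulVec z.1 z.1, p.2 ++ [z]) else p

/-- The subsequence `𝔠(S)` of labeled points queried by the BBQ query process on `S`,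
starting from `A_0 = λ·I`. -/
noncomputable def bbqLQueries (lam τ : ℝ) (S : List ((Fin d → ℝ) × ℝ)) :
    List ((Fin d → ℝ) × ℝ) :=
  (S.foldl (bbqLStep τ) (lam • (1 : Matrix (Fin d) (Fin d) ℝ), [])).2

/-- Regularized Gram matrix `λ·I + Σ_{(x,y) ∈ L} x xᵀ` of a list of labeled points. -/
noncomputable def gramOf (lam : ℝ) (L : List ((Fin d → ℝ) × ℝ)) :
    Matrix (Fin d) (Fin d) ℝ :=
  lam • (1 : Matrix (Fin d) (Fin d) ℝ) + (L.map fun z => vecMulVec z.1 z.1).sum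

/-- Moment vector `Σ_{(x,y) ∈ L} y·x` of a list of labeled points. -/
noncomputable def momentOf (L : List ((Fin d → ℝ) × ℝ)) : Fin d → ℝ :=
  (L.map fun z => z.2 • z.1).sum

open Classical in
/-- State-of-system of the selective-sampling unlearning algorithm: the ridge predictor
computed on `𝔠(S) \ U` together with the retained memory `𝔠(S) \ U`. -/
noncomputable def bbqState (lam τ : ℝ) (S : List ((Fin d → ℝ) × ℝ))
    (U : Set ((Fin d → ℝ) × ℝ)) : (Fin d → ℝ) × List ((Fin d → ℝ) × ℝ) :=
  ((gramOf lam ((bbqLQueries lam τ S).filter (fun z => z ∉ U)))⁻¹ *ᵥ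
      momentOf ((bbqLQueries lam τ S).filter (fun z => z ∉ U)),
    (bbqLQueries lam τ S).filter (fun z => z ∉ U))

/-- Inversion is antitone in the Loewner order. With `u = B⁻¹ x` and `v = A⁻¹ x`, the claim follows
from `0 ≤ (u - v)ᵀ A (u - v) = uᵀ A u - 2 uᵀ x + vᵀ x` and `uᵀ A u ≤ uᵀ B u = uᵀ x`. -/
theorem dotProduct_inv_mulVec_anti {A B : Matrix (Fin d) (Fin d) ℝ} (hA : A.PosDef)
    (hB : B.PosDef) (hAB : (B - A).PosSemidef) (x : Fin d → ℝ) :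
    x ⬝ᵥ (B⁻¹ *ᵥ x) ≤ x ⬝ᵥ (A⁻¹ *ᵥ x) := by
  have hAu : IsUnit A.det := (Matrix.isUnit_iff_isUnit_det A).1 hA.isUnit
  have hBu : IsUnit B.det := (Matrix.isUnit_iff_isUnit_det B).1 hB.isUnit
  obtain ⟨u, hu⟩ : ∃ u, u = B⁻¹ *ᵥ x := ⟨_, rfl⟩
  obtain ⟨v, hv⟩ : ∃ v, v = A⁻¹ *ᵥ x := ⟨_, rfl⟩
  have hBx : B *ᵥ u = x := by
    rw [hu, Matrix.mulVec_mulVec, Matrix.mul_nonsing_inv _ hBu, Matrix.one_mulVec]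
  have hAx : A *ᵥ v = x := by
    rw [hv, Matrix.mulVec_mulVec, Matrix.mul_nonsing_inv _ hAu, Matrix.one_mulVec]
  have hsq := hA.posSemidef.dotProduct_mulVec_nonneg (u - v)
  have hle := hAB.dotProduct_mulVec_nonneg u
  have hsymm : v ⬝ᵥ (A *ᵥ u) = x ⬝ᵥ u := by
    have hAT : Aᵀ = A := by
      simpa [Matrix.IsHermitian, Matrix.conjTranspose_eq_transpose_of_trivial] using hA.isHermitian
    rw [Matrix.dotProduct_mulVec, ← Matrix.mulVec_transpose, hAT, hAx]
  rw [← hu, ← hv]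
  simp only [star_trivial, Matrix.mulVec_sub, Matrix.sub_mulVec, dotProduct_sub, sub_dotProduct,
    hAx, hBx, hsymm] at hsq hle
  rw [dotProduct_comm u x] at hsq hle
  rw [dotProduct_comm v x] at hsq
  linarith

theorem posSemidef_vecMulVec_real (x : Fin d → ℝ) : (vecMulVec x x).PosSemidef := by
  simpa using Matrix.posSemidef_vecMulVec_self_star x

open Classical in
/-- The points queried by the BBQ process on a sequence when it starts from the matrix `A`; unlike
`bbqLQueries`, it is structurally recursive and needs no accumulator. -/
noncomputable def bbqTail (τ : ℝ) :
    Matrix (Fin d) (Fin d) ℝ → List ((Fin d → ℝ) × ℝ) → List ((Fin d → ℝ) × ℝ)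
  | _, [] => []
  | A, z :: S =>
    if z.1 ⬝ᵥ (A⁻¹ *ᵥ z.1) > τ then z :: bbqTail τ (A + vecMulVec z.1 z.1) S else bbqTail τ A S

theorem foldl_bbqLStep_snd (τ : ℝ) (S : List ((Fin d → ℝ) × ℝ))
    (A : Matrix (Fin d) (Fin d) ℝ) (Q : List ((Fin d → ℝ) × ℝ)) :
    (S.foldl (bbqLStep τ) (A, Q)).2 = Q ++ bbqTail τ A S := by
  induction S generalizing A Q with
  | nil => simp [bbqTail]
  | cons z S ih =>
    by_cases h : z.1 ⬝ᵥ (A⁻¹ *ᵥ z.1) > τ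
    · simp [bbqLStep, bbqTail, h, ih]
    · simp [bbqLStep, bbqTail, h, ih]

theorem bbqLQueries_eq_bbqTail (lam τ : ℝ) (S : List ((Fin d → ℝ) × ℝ)) :
    bbqLQueries lam τ S = bbqTail τ (lam • (1 : Matrix (Fin d) (Fin d) ℝ)) S := by
  simp [bbqLQueries, foldl_bbqLStep_snd]

/-- Every point kept from a run started at `A` is queried again by a run on the kept points only,
started at any `A'` below `A` in the Loewner order. Separate starting matrices are needed for the
induction: each deleted point widens the gap between `A'` and `A`. -/
theorem bbqTail_filter_bbqTail (τ : ℝ) (p : (Fin d → ℝ) × ℝ → Bool)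
    (S : List ((Fin d → ℝ) × ℝ)) (A A' : Matrix (Fin d) (Fin d) ℝ) (hA : A.PosDef)
    (hA' : A'.PosDef) (hle : (A - A').PosSemidef) :
    bbqTail τ A' ((bbqTail τ A S).filter p) = (bbqTail τ A S).filter p := by
  induction S generalizing A A' with
  | nil => simp [bbqTail]
  | cons z S ih =>
    by_cases h : z.1 ⬝ᵥ (A⁻¹ *ᵥ z.1) > τ
    · have hz := posSemidef_vecMulVec_real z.1
      by_cases hp : p z
      · have h' : z.1 ⬝ᵥ (A'⁻¹ *ᵥ z.1) > τ :=
          lt_of_lt_of_le h (dotProduct_inv_mulVec_anti hA' hA hle z.1)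
        have ih' := ih (A + vecMulVec z.1 z.1) (A' + vecMulVec z.1 z.1)
          (hA.add_posSemidef hz) (hA'.add_posSemidef hz) (by simpa using hle)
        simp only [bbqTail, if_pos h, List.filter_cons, if_pos hp, if_pos h', ih']
      · have ih' := ih (A + vecMulVec z.1 z.1) A' (hA.add_posSemidef hz) hA'
          (by simpa [add_sub_right_comm] using hle.add hz)
        simp only [bbqTail, if_pos h, List.filter_cons, if_neg hp, ih']
    · simp only [bbqTail, if_neg h]
      exact ih A A' hA hA' hle

/-- The identity `𝔠(𝔠(S) \ U) = 𝔠(S) \ U`, with the deletion given by a Boolean predicate. -/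
theorem bbqLQueries_filter_bbqLQueries (lam τ : ℝ) (hlam : 0 < lam)
    (S : List ((Fin d → ℝ) × ℝ)) (p : (Fin d → ℝ) × ℝ → Bool) :
    bbqLQueries lam τ ((bbqLQueries lam τ S).filter p) = (bbqLQueries lam τ S).filter p := by
  have h1 : (lam • (1 : Matrix (Fin d) (Fin d) ℝ)).PosDef := Matrix.PosDef.one.smul hlam
  simp only [bbqLQueries_eq_bbqTail]
  exact bbqTail_filter_bbqTail τ p S _ _ h1 h1 (by simpa using Matrix.PosSemidef.zero)

open Classical in
/-- The selective-sampling unlearning algorithm is an exact system-aware unlearning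
algorithm: for every `S`, taking `S' = 𝔠(S)`, one has `state(S,U) = state(S'\U, ∅)`
for every subset `U` of the entries of `S`. -/
theorem bbq_exact_systemAware_unlearning (lam τ : ℝ) (hlam : 0 < lam) (hτ : 0 < τ)
    (S : List ((Fin d → ℝ) × ℝ)) :
    ∃ S' : List ((Fin d → ℝ) × ℝ), S' = bbqLQueries lam τ S ∧
      ∀ U : Set ((Fin d → ℝ) × ℝ), U ⊆ {z | z ∈ S} →
        bbqState lam τ S U =
          bbqState lam τ (S'.filter (fun z => z ∉ U)) ∅ := by
  refine ⟨_, rfl, fun U _ => ?_⟩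
  simp [bbqState, bbqLQueries_filter_bbqLQueries lam τ hlam]
end
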